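/- arXiv:2511.01035 — 4 statements merged into one kernel-verified Lean document; each statement's English description precedes it below -/
import Mathlib

section
/- Let A > 0 and m > 0 be real numbers and let α ∈ ℝ. Then the following are equivalent: (i) for every constant g ∈ ℝ and every initial value x₀ ∈ ℝ, the sequence defined by x_{k+1} = ((1−α)A − α m)/A · x_k − g converges (to some real limit) as k → ∞; (ii) 0 < α < 2A/(A + m). (This is Proposition 1: the SC-DN-α sub-iterations, whose Fourier coefficients satisfy the affine fixed-point recurrence A·x_{k+1} + (α m − (1−α)A)·x_k + G = 0 with A = ρ_s h_s + Δt²β and m = ρ_f μ_i, converge if and only if 0 < α < 2(ρ_s h_s + Δt²β)/(ρ_s h_s + Δt²β + ρ_f μ_i).) -/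
/-!
If `c ≠ 1`, the recurrence `x (k + 1) = c • x k - g` has a unique fixed point `L`, and
`x k - L = c ^ k • (x 0 - L)`, so all its solutions converge exactly when `c ^ k → 0`. If `c = 1`,
it is a translation by `-g`, without fixed point for `g ≠ 0`. The coefficient of the
SC-DN-α scheme is `c = 1 - α * ((A + m) / A)`, that of a Richardson iteration with parameter `α`
for the preconditioned eigenvalue `(A + m) / A`.
-/

open Filter Topology

section AffineIteration

variable {𝕜 E : Type*} [NormedField 𝕜] [NormedAddCommGroup E] [NormedSpace 𝕜 E]
  {c : 𝕜} {g L v : E} {x : ℕ → E}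

/-- The sequence `x` is an affine fixed-point iteration with coefficient `c` and constant `g`, the
latter entering with a minus sign as in the SC-DN-α recurrence. The initial value `x 0` is free. -/
def IsAffineIteration (c : 𝕜) (g : E) (x : ℕ → E) : Prop :=
  ∀ k, x (k + 1) = c • x k - g

namespace IsAffineIteration

theorem eq_of_tendsto (hx : IsAffineIteration c g x) (hL : Tendsto x atTop (𝓝 L)) :
    L = c • L - g := by
  have shifted : Tendsto (fun k => c • x k - g) atTop (𝓝 L) :=
    ((tendsto_add_atTop_iff_nat 1).2 hL).congr hx
  exact tendsto_nhds_unique shifted ((hL.const_smul c).sub_const g)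

theorem sub_eq_pow_smul (hx : IsAffineIteration c g x) (hL : L = c • L - g) (k : ℕ) :
    x k - L = c ^ k • (x 0 - L) := by
  induction k with
  | zero => simp
  | succ k ih =>
    calc x (k + 1) - L = (c • x k - g) - (c • L - g) := by rw [hx k, ← hL]
      _ = c • (x k - L) := by rw [sub_sub_sub_cancel_right, smul_sub]
      _ = c ^ (k + 1) • (x 0 - L) := by rw [ih, smul_smul, pow_succ']

theorem tendsto_of_norm_lt_one (hx : IsAffineIteration c g x) (hL : L = c • L - g)
    (hc : ‖c‖ < 1) : Tendsto x atTop (𝓝 L) := by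
  have error_tendsto : Tendsto (fun k => c ^ k • (x 0 - L)) atTop (𝓝 0) := by
    simpa only [zero_smul] using
      (tendsto_pow_atTop_nhds_zero_of_norm_lt_one hc).smul_const (x 0 - L)
  exact tendsto_sub_nhds_zero_iff.1 <|
    error_tendsto.congr fun k => (hx.sub_eq_pow_smul hL k).symm

theorem not_tendsto_of_coeff_one (hx : IsAffineIteration (1 : 𝕜) g x) (hg : g ≠ 0) :
    ¬Tendsto x atTop (𝓝 L) := fun hL =>
  hg <| sub_eq_self.1 <| by simpa only [one_smul] using (hx.eq_of_tendsto hL).symm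

end IsAffineIteration

theorem isAffineIteration_neg_nsmul (g : E) :
    IsAffineIteration (1 : 𝕜) g fun k => -(k • g) := fun k => by
  simp only [succ_nsmul, one_smul, neg_add, sub_eq_add_neg]

theorem isAffineIteration_pow_smul (c : 𝕜) (v : E) :
    IsAffineIteration c 0 fun k => c ^ k • v := fun k => by
  simp only [pow_succ', mul_smul, sub_zero]

theorem exists_eq_smul_sub (hc : c ≠ 1) (g : E) : ∃ L : E, L = c • L - g := by
  refine ⟨(c - 1)⁻¹ • g, ?_⟩
  have inverse : (c - 1) • (c - 1)⁻¹ • g = g := smul_inv_smul₀ (sub_ne_zero.2 hc) g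
  rw [sub_smul, one_smul] at inverse
  rw [eq_sub_iff_add_eq', ← eq_sub_iff_add_eq, inverse]

theorem norm_lt_one_of_tendsto_pow_smul (hc : c ≠ 1) (hv : v ≠ 0)
    (hL : Tendsto (fun k : ℕ => c ^ k • v) atTop (𝓝 L)) : ‖c‖ < 1 := by
  have fixed : c • L = L := by
    simpa only [sub_zero] using ((isAffineIteration_pow_smul c v).eq_of_tendsto hL).symm
  have L_eq_zero : L = 0 := by
    by_contra hL₀
    exact hc (smul_left_injective 𝕜 hL₀ (fixed.trans (one_smul 𝕜 L).symm))
  have norm_pow_tendsto : Tendsto (fun k : ℕ => ‖c ^ k‖) atTop (𝓝 0) := by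
    simpa only [L_eq_zero, norm_smul, norm_zero, zero_div,
      mul_div_cancel_right₀ _ (norm_ne_zero_iff.2 hv)] using hL.norm.div_const ‖v‖
  exact tendsto_pow_atTop_nhds_zero_iff_norm_lt_one.1
    (tendsto_zero_iff_norm_tendsto_zero.2 norm_pow_tendsto)

theorem forall_isAffineIteration_tendsto_iff [Nontrivial E] (c : 𝕜) :
    (∀ (g : E) (x : ℕ → E), IsAffineIteration c g x → ∃ L, Tendsto x atTop (𝓝 L)) ↔
      ‖c‖ < 1 := by
  constructor
  · intro converges
    obtain ⟨v, hv⟩ := exists_ne (0 : E)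
    have hc : c ≠ 1 := by
      rintro rfl
      have drift := isAffineIteration_neg_nsmul (𝕜 := 𝕜) v
      obtain ⟨L, hL⟩ := converges v _ drift
      exact drift.not_tendsto_of_coeff_one hv hL
    obtain ⟨L, hL⟩ := converges 0 _ (isAffineIteration_pow_smul c v)
    exact norm_lt_one_of_tendsto_pow_smul hc hv hL
  · intro hc g x hx
    have hc' : c ≠ 1 := by
      rintro rfl
      exact hc.ne norm_one
    obtain ⟨L, hL⟩ := exists_eq_smul_sub hc' g
    exact ⟨L, hx.tendsto_of_norm_lt_one hL hc⟩

end AffineIteration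

section RichardsonCoefficient

variable {K : Type*} [Field K]

theorem scdn_coeff_eq_one_sub_mul {A : K} (hA : A ≠ 0) (m α : K) :
    ((1 - α) * A - α * m) / A = 1 - α * ((A + m) / A) := by
  field_simp
  ring

theorem abs_one_sub_mul_lt_one_iff [LinearOrder K] [IsStrictOrderedRing K] {a : K} (ha : 0 < a)
    (α : K) : |1 - α * a| < 1 ↔ 0 < α ∧ α < 2 / a := by
  rw [abs_sub_lt_iff, sub_lt_self_iff, mul_pos_iff_of_pos_right ha, sub_lt_iff_lt_add,
    one_add_one_eq_two, lt_div_iff₀ ha]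

end RichardsonCoefficient

theorem scdn_alpha_convergence_iff_general {E : Type*} [NormedAddCommGroup E] [NormedSpace ℝ E]
    [Nontrivial E] (A m α : ℝ) (h : 0 < (A + m) / A) :
    (∀ (g : E) (x : ℕ → E), (∀ k, x (k + 1) = (((1 - α) * A - α * m) / A) • x k - g) →
        ∃ L, Tendsto x atTop (𝓝 L)) ↔
      0 < α ∧ α < 2 * A / (A + m) := by
  have hA : A ≠ 0 := (div_ne_zero_iff.1 h.ne').2
  have contraction_iff : |((1 - α) * A - α * m) / A| < 1 ↔ 0 < α ∧ α < 2 * A / (A + m) := by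
    rw [scdn_coeff_eq_one_sub_mul hA, abs_one_sub_mul_lt_one_iff h, div_div_eq_mul_div]
  exact (forall_isAffineIteration_tendsto_iff _).trans contraction_iff

/-- Proposition 1 (convergence of the SC-DN-α sub-iterations): with
`A = ρ_s h_s + Δt²β > 0` and `m = ρ_f μ_i > 0`, the affine fixed-point
recurrence `x_{k+1} = ((1−α)A − αm)/A · x_k − g` converges for every
constant `g` and every initial datum `x₀` if and only if
`0 < α < 2A/(A + m)`. -/
theorem scdn_alpha_convergence_iff (A m α : ℝ) (hA : 0 < A) (hm : 0 < m) :
    (∀ g x₀ : ℝ, ∀ x : ℕ → ℝ, x 0 = x₀ →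
        (∀ k : ℕ, x (k + 1) = ((1 - α) * A - α * m) / A * x k - g) →
        ∃ L : ℝ, Filter.Tendsto x Filter.atTop (nhds L)) ↔
      (0 < α ∧ α < 2 * A / (A + m)) := by
  rw [← scdn_alpha_convergence_iff_general (E := ℝ) A m α (by positivity)]
  exact ⟨fun h g x => h g (x 0) x rfl, fun h g _ x _ => h g x⟩
end

section
/- Let s > 0, m > 0, β > 0, Δt > 0 and 0 < α ≤ 1. If m > β(2−α)Δt²/(4α) + (2(1−α)/α + 1)·s, then the characteristic polynomial χ of the LC-DN-α scheme has a real root y with y < −1; in particular χ has a real root of modulus strictly greater than 1. (Proposition 2: the LC-DN-α scheme is unconditionally unstable when ρ_f μ_i exceeds this threshold.) -/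
/-- Characteristic polynomial of the LC-DN-α scheme for the benchmark FSI
problem, with `s = ρ_s h_s`, `m = ρ_f μ_i`, `β` the elastic coefficient,
`Δt` the time step and `α` the Richardson acceleration parameter. -/
noncomputable def lcdnChi (s m β Δt α y : ℝ) : ℝ :=
  (s / Δt ^ 2 + β) * y ^ 3
    + (α * m / Δt ^ 2 - β * (1 - α) - 3 * s / Δt ^ 2 + α * s / Δt ^ 2) * y ^ 2
    + (3 * s / Δt ^ 2 - 2 * α * m / Δt ^ 2 - 2 * α * s / Δt ^ 2) * y
    + (-(1 - α) * s / Δt ^ 2 + α * m / Δt ^ 2)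

/-!
`χ(-1)` is a positive multiple of the excess of `m` over the threshold, while the positive leading
coefficient `s / Δt ^ 2 + β` sends `χ` to `-∞` at `-∞`. Hence `χ` vanishes somewhere left of `-1`.
-/

section OddDegree

open Filter Polynomial

theorem tendsto_eval_atBot_of_odd_natDegree {𝕜 : Type*} [NormedField 𝕜] [LinearOrder 𝕜]
    [IsStrictOrderedRing 𝕜] [OrderTopology 𝕜] {p : 𝕜[X]} (hodd : Odd p.natDegree)
    (hlead : 0 < p.leadingCoeff) : Tendsto p.eval atBot atBot := by
  have hreflect : Tendsto (p.comp (-X)).eval atTop atBot := by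
    refine tendsto_atBot_of_leadingCoeff_nonpos _ ?_ ?_
    · simpa [natDegree_pos_iff_degree_pos] using hodd.pos
    · simpa [hodd.neg_one_pow] using hlead.le
  simpa [Function.comp_def] using hreflect.comp tendsto_neg_atBot_atTop

theorem exists_lt_isRoot_of_odd_natDegree {p : ℝ[X]} (hodd : Odd p.natDegree)
    (hlead : 0 < p.leadingCoeff) {x : ℝ} (hx : 0 < p.eval x) : ∃ y < x, p.IsRoot y := by
  obtain ⟨y, hyx, hy⟩ : 0 ∈ p.eval '' Set.Iic x :=
    isPreconnected_Iic.intermediate_value_Iic Set.self_mem_Iic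
      (le_principal_iff.2 (Iic_mem_atBot x)) p.continuousOn
      (tendsto_eval_atBot_of_odd_natDegree hodd hlead) hx.le
  exact ⟨y, lt_of_le_of_ne hyx fun hxy ↦ hx.ne' (hxy ▸ hy), hy⟩

theorem exists_lt_cubic_eq_zero {a b c d x : ℝ} (ha : 0 < a)
    (hx : 0 < a * x ^ 3 + b * x ^ 2 + c * x + d) :
    ∃ y < x, a * y ^ 3 + b * y ^ 2 + c * y + d = 0 := by
  let P : Cubic ℝ := ⟨a, b, c, d⟩
  have heval (y : ℝ) : P.toPoly.eval y = a * y ^ 3 + b * y ^ 2 + c * y + d := by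
    simp [P, Cubic.toPoly]
  have hodd : Odd P.toPoly.natDegree := by
    rw [Cubic.natDegree_of_a_ne_zero ha.ne']
    decide
  have hlead : 0 < P.toPoly.leadingCoeff := by
    rwa [Cubic.leadingCoeff_of_a_ne_zero ha.ne']
  simpa only [IsRoot.def, heval] using
    exists_lt_isRoot_of_odd_natDegree hodd hlead (hx.trans_eq (heval x).symm)

end OddDegree

section LCDN

variable {s m β Δt α : ℝ}

theorem lcdnChi_neg_one (hΔt : Δt ≠ 0) (hα : α ≠ 0) :
    lcdnChi s m β Δt α (-1) = 4 * α / Δt ^ 2 *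
      (m - (β * (2 - α) * Δt ^ 2 / (4 * α) + (2 * (1 - α) / α + 1) * s)) := by
  unfold lcdnChi
  field_simp
  ring

theorem lcdnChi_neg_one_pos_iff (hΔt : Δt ≠ 0) (hα : 0 < α) :
    0 < lcdnChi s m β Δt α (-1) ↔
      β * (2 - α) * Δt ^ 2 / (4 * α) + (2 * (1 - α) / α + 1) * s < m := by
  rw [lcdnChi_neg_one hΔt hα.ne', mul_pos_iff_of_pos_left (by positivity), sub_pos]

theorem lcdn_alpha_unstable_root_general (hΔt : Δt ≠ 0) (hα : 0 < α)
    (hlead : 0 < s / Δt ^ 2 + β)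
    (hmass : m > β * (2 - α) * Δt ^ 2 / (4 * α) + (2 * (1 - α) / α + 1) * s) :
    ∃ y < -1, lcdnChi s m β Δt α y = 0 :=
  exists_lt_cubic_eq_zero hlead ((lcdnChi_neg_one_pos_iff hΔt hα).2 hmass)

end LCDN

/-- Proposition 2 (instability of the LC-DN-α scheme): if `0 < α ≤ 1` and
`m = ρ_f μ_i` exceeds the threshold `β(2−α)Δt²/(4α) + (2(1−α)/α + 1)s`,
then the characteristic polynomial has a real root `y < −1`; in particular
it has a real root of modulus strictly greater than 1. -/
theorem lcdn_alpha_unstable_root (s m β Δt α : ℝ)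
    (hs : 0 < s) (hm : 0 < m) (hβ : 0 < β) (hΔt : 0 < Δt)
    (hα₀ : 0 < α) (hα₁ : α ≤ 1)
    (hmass : m > β * (2 - α) * Δt ^ 2 / (4 * α) + (2 * (1 - α) / α + 1) * s) :
    ∃ y : ℝ, lcdnChi s m β Δt α y = 0 ∧ y < -1 ∧ 1 < |y| := by
  obtain ⟨y, hy, hroot⟩ := lcdn_alpha_unstable_root_general hΔt.ne' hα₀ (by positivity) hmass
  exact ⟨y, hroot, hy, lt_abs.2 (.inr (lt_neg_of_lt_neg hy))⟩
end

section
/- Let s > 0, m > 0, β > 0, Δt > 0 and 0 < α ≤ 1, and assume m > β(2−α)Δt²/(4α) + (2(1−α)/α + 1)·s. Then there exists a sequence η : ℕ → ℝ satisfying, for all n, the recurrence (s + βΔt²)·η_{n+3} + (α m − (1−α)βΔt² − (3−α)s)·η_{n+2} + ((3−2α)s − 2α m)·η_{n+1} + (α m − (1−α)s)·η_n = 0, such that η is unbounded, i.e. for every M > 0 there is n with |η_n| > M. (Instability of the LC-DN-α scheme in the large added-mass regime, as asserted in Proposition 2.) -/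
/-!
The geometric sequence `y ^ n` solves the recurrence exactly when `y` is a root of the
characteristic polynomial `χ`, so a root `y < -1` gives an unbounded solution. Since `χ` is a cubic
with positive leading coefficient, it has such a root as soon as `0 < χ(-1)`. Finally
`χ(-1) = 4αm - (2 - α)(βΔt² + 4s)` after multiplication by `Δt²`, and the lower bound on the
added mass `m` says precisely that this is positive.
-/

open Filter Polynomial Set

theorem tendsto_eval_atBot_atBot_of_odd_natDegree {𝕜 : Type*} [NormedField 𝕜] [LinearOrder 𝕜]
    [IsStrictOrderedRing 𝕜] [OrderTopology 𝕜] {P : 𝕜[X]} (hodd : Odd P.natDegree)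
    (hlead : 0 ≤ P.leadingCoeff) : Tendsto (fun x => P.eval x) atBot atBot := by
  have hdeg : 0 < (P.comp (-X)).degree := by
    rw [degree_comp_neg_X]
    exact natDegree_pos_iff_degree_pos.mp hodd.pos
  have hlead_reflected : (P.comp (-X)).leadingCoeff ≤ 0 := by
    rwa [comp_neg_X_leadingCoeff_eq, hodd.neg_one_pow, neg_one_mul, neg_nonpos]
  have hreflected := tendsto_atBot_of_leadingCoeff_nonpos _ hdeg hlead_reflected
  simpa [Function.comp_def] using hreflected.comp tendsto_neg_atBot_atTop

theorem exists_isRoot_lt_of_odd_natDegree {P : ℝ[X]} {a : ℝ} (hodd : Odd P.natDegree)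
    (hlead : 0 ≤ P.leadingCoeff) (ha : 0 < P.eval a) : ∃ y < a, P.IsRoot y :=
  intermediate_value_Iio P.continuousOn (tendsto_eval_atBot_atBot_of_odd_natDegree hodd hlead) ha

section LinearRecurrences

variable {R : Type*}

/-- The sequence `u` solves the homogeneous linear recurrence with constant coefficients whose
characteristic polynomial is `P`, that is `∑ i, P.coeff i * u (n + i) = 0` for all `n`. Unlike in
`LinearRecurrence.IsSolution`, `P` need not be monic. -/
def IsRecurrenceSolution [Semiring R] (P : R[X]) (u : ℕ → R) : Prop :=
  ∀ n, P.sum (fun i c => c * u (n + i)) = 0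

theorem isRecurrenceSolution_pow_iff_isRoot [CommSemiring R] {P : R[X]} {y : R} :
    IsRecurrenceSolution P (fun n => y ^ n) ↔ P.IsRoot y := by
  have sum_eq (n : ℕ) : P.sum (fun i c => c * y ^ (n + i)) = y ^ n * P.eval y := by
    simp only [eval_eq_sum, Polynomial.sum, Finset.mul_sum, pow_add, mul_left_comm]
  simp only [IsRecurrenceSolution, sum_eq, IsRoot.def]
  exact ⟨fun h => by simpa using h 0, fun h n => by rw [h, mul_zero]⟩

theorem isRecurrenceSolution_toPoly_iff [Semiring R] {P : Cubic R} {u : ℕ → R} :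
    IsRecurrenceSolution P.toPoly u ↔
      ∀ n, P.a * u (n + 3) + P.b * u (n + 2) + P.c * u (n + 1) + P.d * u n = 0 := by
  have sum_eq (n : ℕ) : P.toPoly.sum (fun i c => c * u (n + i)) =
      P.a * u (n + 3) + P.b * u (n + 2) + P.c * u (n + 1) + P.d * u n := by
    have hdeg : P.toPoly.natDegree < 4 := Nat.lt_succ_of_le natDegree_cubic_le
    rw [sum_over_range' _ (fun i => zero_mul (u (n + i))) 4 hdeg]
    simp only [Finset.sum_range_succ, Finset.sum_range_zero, zero_add, add_zero,
      Cubic.coeff_eq_a, Cubic.coeff_eq_b, Cubic.coeff_eq_c, Cubic.coeff_eq_d]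
    abel
  simp only [IsRecurrenceSolution, sum_eq]

theorem exists_unbounded_isRecurrenceSolution_of_isRoot [CommRing R] [LinearOrder R]
    [IsStrictOrderedRing R] [Archimedean R] {P : R[X]} {y : R} (hroot : P.IsRoot y)
    (hy : 1 < |y|) : ∃ u : ℕ → R, IsRecurrenceSolution P u ∧ ∀ M, ∃ n, M < |u n| := by
  refine ⟨fun n => y ^ n, isRecurrenceSolution_pow_iff_isRoot.mpr hroot, fun M => ?_⟩
  simpa only [abs_pow] using pow_unbounded_of_one_lt M hy

theorem exists_unbounded_isRecurrenceSolution_of_odd_natDegree {P : ℝ[X]}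
    (hodd : Odd P.natDegree) (hlead : 0 ≤ P.leadingCoeff) (hneg_one : 0 < P.eval (-1)) :
    ∃ u : ℕ → ℝ, IsRecurrenceSolution P u ∧ ∀ M, ∃ n, M < |u n| := by
  obtain ⟨y, hy, hroot⟩ := exists_isRoot_lt_of_odd_natDegree hodd hlead hneg_one
  exact exists_unbounded_isRecurrenceSolution_of_isRoot hroot (lt_abs.mpr (.inr (lt_neg.mpr hy)))

end LinearRecurrences

section LCDNAlpha

/-- The characteristic polynomial `χ` of the LC-DN-α scheme, multiplied by `Δt ^ 2`. -/
def lcdnAlphaCubic (s m β Δt α : ℝ) : Cubic ℝ where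
  a := s + β * Δt ^ 2
  b := α * m - (1 - α) * β * Δt ^ 2 - (3 - α) * s
  c := (3 - 2 * α) * s - 2 * α * m
  d := α * m - (1 - α) * s

variable {s m β Δt α : ℝ}

theorem lcdnAlphaCubic_eval_neg_one :
    (lcdnAlphaCubic s m β Δt α).toPoly.eval (-1) =
      4 * α * m - (2 - α) * (β * Δt ^ 2 + 4 * s) := by
  simp only [lcdnAlphaCubic, Cubic.toPoly, eval_add, eval_mul, eval_C, eval_pow, eval_X]
  ring

theorem addedMass_gt_iff (hα : 0 < α) :
    m > β * (2 - α) * Δt ^ 2 / (4 * α) + (2 * (1 - α) / α + 1) * s ↔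
      (2 - α) * (β * Δt ^ 2 + 4 * s) < 4 * α * m := by
  have threshold_eq : β * (2 - α) * Δt ^ 2 / (4 * α) + (2 * (1 - α) / α + 1) * s =
      (2 - α) * (β * Δt ^ 2 + 4 * s) / (4 * α) := by
    field_simp
    ring
  rw [gt_iff_lt, threshold_eq, div_lt_iff₀' (by positivity)]

theorem lcdn_alpha_unbounded_solution_general
    (ha : 0 < s + β * Δt ^ 2) (hmass : (2 - α) * (β * Δt ^ 2 + 4 * s) < 4 * α * m) :
    ∃ η : ℕ → ℝ,
      (∀ n : ℕ,
        (s + β * Δt ^ 2) * η (n + 3)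
          + (α * m - (1 - α) * β * Δt ^ 2 - (3 - α) * s) * η (n + 2)
          + ((3 - 2 * α) * s - 2 * α * m) * η (n + 1)
          + (α * m - (1 - α) * s) * η n = 0) ∧
      (∀ M : ℝ, 0 < M → ∃ n : ℕ, M < |η n|) := by
  set χ := lcdnAlphaCubic s m β Δt α
  have hodd : Odd χ.toPoly.natDegree := by
    rw [Cubic.natDegree_of_a_ne_zero (P := χ) ha.ne']
    decide
  have hlead : 0 ≤ χ.toPoly.leadingCoeff := by
    rw [Cubic.leadingCoeff_of_a_ne_zero (P := χ) ha.ne']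
    exact ha.le
  have hneg_one : 0 < χ.toPoly.eval (-1) := by
    rwa [lcdnAlphaCubic_eval_neg_one, sub_pos]
  obtain ⟨η, hη, hunbounded⟩ :=
    exists_unbounded_isRecurrenceSolution_of_odd_natDegree hodd hlead hneg_one
  exact ⟨η, isRecurrenceSolution_toPoly_iff.mp hη, fun M _ => hunbounded M⟩

end LCDNAlpha

/-- Proposition 2, expressed on the finite-difference equation satisfied by
the Fourier coefficients of the interface displacement produced by the
LC-DN-α scheme: in the large added-mass regime
`m > β(2−α)Δt²/(4α) + (2(1−α)/α + 1)s`, with `0 < α ≤ 1`, there exists an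
unbounded solution of the recurrence, i.e. the scheme is unstable. -/
theorem lcdn_alpha_unbounded_solution (s m β Δt α : ℝ)
    (hs : 0 < s) (hm : 0 < m) (hβ : 0 < β) (hΔt : 0 < Δt)
    (hα₀ : 0 < α) (hα₁ : α ≤ 1)
    (hmass : m > β * (2 - α) * Δt ^ 2 / (4 * α) + (2 * (1 - α) / α + 1) * s) :
    ∃ η : ℕ → ℝ,
      (∀ n : ℕ,
        (s + β * Δt ^ 2) * η (n + 3)
          + (α * m - (1 - α) * β * Δt ^ 2 - (3 - α) * s) * η (n + 2)
          + ((3 - 2 * α) * s - 2 * α * m) * η (n + 1)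
          + (α * m - (1 - α) * s) * η n = 0) ∧
      (∀ M : ℝ, 0 < M → ∃ n : ℕ, M < |η n|) := by
  exact lcdn_alpha_unbounded_solution_general (by positivity) ((addedMass_gt_iff hα₀).mp hmass)
end

section
/- Let s > 0, m > 0, β > 0, Δt > 0, assume s/m < 1 and 0 < α < ᾱ := 2(s/m)/((s/m) + 1) = 2s/(s + m). Set a₃ = 1 + βΔt²/s, a₂ = −3 + α − (1−α)βΔt²/s + α m/s, a₁ = 3 − 2α − 2α m/s, a₀ = α m/s − 1 + α (the coefficients of the normalized characteristic polynomial Q(y) = (Δt²/s)·χ(y) of the LC-DN-α scheme). Then |a₀² − a₃²| > |a₀·a₂ − a₁·a₃| (fourth Jury condition in the proof of Proposition 3). -/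
/-!
With `b = βΔt²/s` and `k = α(1 + m/s)` the coefficients are `a₃ = 1 + b`, `a₂ = k - 3 - (1 - α)b`,
`a₁ = 3 - 2k`, `a₀ = k - 1`, and `α < ᾱ` says exactly that `k < 2`. Bounding `|a₀² - a₃²|` below by
`a₃² - a₀²` leaves two polynomial inequalities, read off from
`a₃(a₃ + a₁) - a₀(a₀ + a₂) = 2(2 - k)(k + b) + b(b + (α + k - αk))` and
`a₃(a₃ - a₁) - a₀(a₀ - a₂) = b(b + (k - α) + αk)`, where `αk ≤ α + k` because `0 ≤ α ≤ k ≤ 2`.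
-/

section OrderedRing

variable {R : Type*} [CommRing R] [LinearOrder R] [IsStrictOrderedRing R]

theorem abs_mul_sub_mul_lt_abs_sq_sub_sq {a₀ a₁ a₂ a₃ : R}
    (h_add : a₀ * (a₀ + a₂) < a₃ * (a₃ + a₁)) (h_sub : a₀ * (a₀ - a₂) < a₃ * (a₃ - a₁)) :
    |a₀ * a₂ - a₁ * a₃| < |a₀ ^ 2 - a₃ ^ 2| := by
  have h_lower : -(a₃ ^ 2 - a₀ ^ 2) < a₀ * a₂ - a₁ * a₃ := by linarith
  have h_upper : a₀ * a₂ - a₁ * a₃ < a₃ ^ 2 - a₀ ^ 2 := by linarith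
  rw [abs_sub_comm (a₀ ^ 2)]
  exact (abs_lt.2 ⟨h_lower, h_upper⟩).trans_le (le_abs_self _)

theorem mul_le_add_of_le_two {x y : R} (hx₀ : 0 ≤ x) (hx₂ : x ≤ 2) (hy₀ : 0 ≤ y) (hy₂ : y ≤ 2) :
    x * y ≤ x + y := by
  have hxy : 0 ≤ x * (2 - y) := mul_nonneg hx₀ (sub_nonneg.2 hy₂)
  have hyx : 0 ≤ y * (2 - x) := mul_nonneg hy₀ (sub_nonneg.2 hx₂)
  linarith

variable {b k α : R}

theorem lcdn_mul_add_lt_mul_add (hb : 0 < b) (hk₀ : 0 ≤ k) (hk₂ : k ≤ 2) (hαk : α * k ≤ α + k) :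
    (k - 1) * (k - 1 + (k - 3 - (1 - α) * b)) < (1 + b) * (1 + b + (3 - 2 * k)) := by
  have h_left : 0 ≤ 2 * (2 - k) * (k + b) :=
    mul_nonneg (mul_nonneg zero_le_two (sub_nonneg.2 hk₂)) (add_nonneg hk₀ hb.le)
  have h_right : 0 < b * (b + (α + k - α * k)) :=
    mul_pos hb (add_pos_of_pos_of_nonneg hb (sub_nonneg.2 hαk))
  linarith

theorem lcdn_mul_sub_lt_mul_sub (hb : 0 < b) (hα₀ : 0 ≤ α) (hαk : α ≤ k) :
    (k - 1) * (k - 1 - (k - 3 - (1 - α) * b)) < (1 + b) * (1 + b - (3 - 2 * k)) := by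
  have h_prod : 0 ≤ α * k := mul_nonneg hα₀ (hα₀.trans hαk)
  have h_pos : 0 < b * (b + (k - α) + α * k) := mul_pos hb (by linarith)
  linarith

theorem lcdn_jury_four_of_le_two (hb : 0 < b) (hα₀ : 0 ≤ α) (hαk : α ≤ k) (hk₂ : k ≤ 2) :
    |(k - 1) * (k - 3 - (1 - α) * b) - (3 - 2 * k) * (1 + b)| < |(k - 1) ^ 2 - (1 + b) ^ 2| := by
  have hk₀ : 0 ≤ k := hα₀.trans hαk
  have h_mul : α * k ≤ α + k := mul_le_add_of_le_two hα₀ (hαk.trans hk₂) hk₀ hk₂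
  exact abs_mul_sub_mul_lt_abs_sq_sub_sq
    (lcdn_mul_add_lt_mul_add hb hk₀ hk₂ h_mul) (lcdn_mul_sub_lt_mul_sub hb hα₀ hαk)

end OrderedRing

section OrderedField

variable {K : Type*} [Field K] [LinearOrder K] [IsStrictOrderedRing K] {s m β Δt α : K}

theorem le_two_mul_div_div_add_one_iff (hs : 0 < s) (hm : 0 < m) :
    α ≤ 2 * (s / m) / (s / m + 1) ↔ α + α * m / s ≤ 2 := by
  have h_bound : 2 * (s / m) / (s / m + 1) = 2 / (1 + m / s) := by field_simp
  have h_sum : α + α * m / s = α * (1 + m / s) := by ring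
  rw [h_bound, h_sum, le_div_iff₀ (by positivity)]

theorem lcdn_jury_four_general (hs : 0 < s) (hm : 0 < m) (hβ : 0 < β) (hΔt : 0 < Δt)
    (hα₀ : 0 ≤ α) (hα₁ : α ≤ 2 * (s / m) / (s / m + 1)) :
    |(α * m / s - 1 + α) ^ 2 - (1 + β * Δt ^ 2 / s) ^ 2| >
      |(α * m / s - 1 + α) * (-3 + α - (1 - α) * (β * Δt ^ 2 / s) + α * m / s)
        - (3 - 2 * α - 2 * α * m / s) * (1 + β * Δt ^ 2 / s)| := by
  have hb : 0 < β * Δt ^ 2 / s := by positivity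
  have hαk : α ≤ α + α * m / s := le_add_of_nonneg_right (by positivity)
  have hk₂ : α + α * m / s ≤ 2 := (le_two_mul_div_div_add_one_iff hs hm).1 hα₁
  convert lcdn_jury_four_of_le_two hb hα₀ hαk hk₂ using 2 <;> ring

end OrderedField

/-- Fourth Jury condition in the proof of Proposition 3: with
`a₃ = 1 + βΔt²/s`, `a₂ = −3 + α − (1−α)βΔt²/s + αm/s`,
`a₁ = 3 − 2α − 2αm/s`, `a₀ = αm/s − 1 + α` the coefficients of the
normalized characteristic polynomial of the LC-DN-α scheme, if `s/m < 1`
and `0 < α < 2(s/m)/((s/m) + 1)` then `|a₀² − a₃²| > |a₀a₂ − a₁a₃|`. -/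
theorem lcdn_jury_four (s m β Δt α : ℝ)
    (hs : 0 < s) (hm : 0 < m) (hβ : 0 < β) (hΔt : 0 < Δt)
    (hratio : s / m < 1)
    (hα₀ : 0 < α) (hα₁ : α < 2 * (s / m) / (s / m + 1)) :
    |(α * m / s - 1 + α) ^ 2 - (1 + β * Δt ^ 2 / s) ^ 2| >
      |(α * m / s - 1 + α) * (-3 + α - (1 - α) * (β * Δt ^ 2 / s) + α * m / s)
        - (3 - 2 * α - 2 * α * m / s) * (1 + β * Δt ^ 2 / s)| :=
  lcdn_jury_four_general hs hm hβ hΔt hα₀.le hα₁.le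
end
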